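/- Let n be a nonnegative integer and let ξ_1, …, ξ_n be any points in [0,1]. Then there exists a continuously differentiable function f : [0,1] → ℝ whose derivative f′ is Lipschitz with constant 1 on [0,1] (so that ‖f″‖_∞ ≤ 1 where f is twice differentiable), such that f(ξ_i) = 0 for all i = 1,…,n and sup_{0≤x≤1} |f(x)| ≥ 1/(16(n+1)²). (Fooling-function construction underlying the lower complexity bound for L∞ function recovery on balls: f is a bump with piecewise constant second derivative supported on the largest gap between consecutive sample points.) -/

import Mathlib

open Set

/-!
Cut `[a, b]` into `N + 1` equal pieces: `N` sample points must miss the interior of one of them.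
A function supported on that piece, with second derivative `1`, `-1`, `1` on its first quarter,
its middle half and its last quarter, has height `(ℓ / 4) ^ 2`, where `ℓ` is the length of the
piece.
-/

lemma exists_forall_notMem_of_pairwise_disjoint {α ι κ : Type*} [Fintype ι] [Fintype κ]
    (hcard : Fintype.card ι < Fintype.card κ) {s : κ → Set α}
    (hs : Pairwise (Function.onFun Disjoint s)) (ξ : ι → α) :
    ∃ k, ∀ i, ξ i ∉ s k := by
  by_contra! hmeets
  choose i hi using hmeets
  have i_injective : Function.Injective i := fun k l hkl =>
    hs.eq <| not_disjoint_iff.mpr ⟨ξ (i k), hi k, hkl ▸ hi l⟩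
  exact hcard.not_ge (Fintype.card_le_of_injective i i_injective)

lemma exists_Icc_subset_forall_notMem_Ioo {K ι : Type*} [Field K] [LinearOrder K]
    [IsStrictOrderedRing K] [Fintype ι] {a b : K} (hab : a ≤ b) (ξ : ι → K) :
    ∃ u v, u ≤ v ∧ Icc u v ⊆ Icc a b ∧ v - u = (b - a) / (Fintype.card ι + 1) ∧
      ∀ i, ξ i ∉ Ioo u v := by
  set N := Fintype.card ι with hN
  set d := (b - a) / (N + 1)
  have d_nonneg : 0 ≤ d := div_nonneg (sub_nonneg.mpr hab) (by positivity)
  have total_length : (N + 1) * d = b - a := mul_div_cancel₀ _ (by positivity)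
  have cells_disjoint : Pairwise (Function.onFun Disjoint fun k : Fin (N + 1) =>
      Ioo (a + (k : ℤ) • d) (a + ((k : ℤ) + 1) • d)) :=
    (pairwise_disjoint_Ioo_add_zsmul a d).comp_of_injective
      (Nat.cast_injective.comp Fin.val_injective)
  obtain ⟨k, hk⟩ := exists_forall_notMem_of_pairwise_disjoint (by simp [hN]) cells_disjoint ξ
  have k_succ_le : (k : K) + 1 ≤ N + 1 := mod_cast k.isLt
  refine ⟨_, _, ?_, Icc_subset_Icc ?_ ?_, ?_, hk⟩
  all_goals simp only [zsmul_eq_mul, Int.cast_add, Int.cast_natCast, Int.cast_one]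
  · linarith
  · exact le_add_of_nonneg_right (by positivity)
  · linarith [mul_le_mul_of_nonneg_right k_succ_le d_nonneg]
  · ring

lemma hasDerivAt_posPart_pow {n : ℕ} (hn : 1 < n) (x : ℝ) :
    HasDerivAt (fun t : ℝ => t⁺ ^ n) (n * x⁺ ^ (n - 1)) x := by
  have of_ne_zero (y : ℝ) (hy : y ≠ 0) :
      HasDerivAt (fun t : ℝ => t⁺ ^ n) (n * y⁺ ^ (n - 1)) y := by
    rcases hy.lt_or_gt with hneg | hpos
    · have hzero : (fun t : ℝ => t⁺ ^ n) =ᶠ[nhds y] fun _ => 0 := by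
        filter_upwards [eventually_lt_nhds hneg] with t ht
        rw [posPart_eq_zero.mpr ht.le, zero_pow (by lia)]
      rw [posPart_eq_zero.mpr hneg.le, zero_pow (by lia), mul_zero]
      exact (hasDerivAt_const y 0).congr_of_eventuallyEq hzero
    · have hpow : (fun t : ℝ => t⁺ ^ n) =ᶠ[nhds y] fun t => t ^ n := by
        filter_upwards [eventually_gt_nhds hpos] with t ht
        rw [posPart_eq_self.mpr ht.le]
      rw [posPart_eq_self.mpr hpos.le]
      exact (hasDerivAt_pow n y).congr_of_eventuallyEq hpow
  exact hasDerivAt_of_hasDerivAt_of_ne' of_ne_zero (by fun_prop) (by fun_prop) x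

/-- The bump on `[a, b]` with second derivative `1`, `-1`, `1` on the first quarter, the middle
half and the last quarter of the interval, written as a quadratic spline: each truncated square
contributes the jump of the second derivative at its knot. -/
noncomputable def quadraticBump (a b x : ℝ) : ℝ :=
  ((x - a)⁺ ^ 2 - 2 * (x - (3 * a + b) / 4)⁺ ^ 2
    + 2 * (x - (a + 3 * b) / 4)⁺ ^ 2 - (x - b)⁺ ^ 2) / 2

/-- The derivative of `quadraticBump a b`. It is written with `min` and `max` of functions of
slope `0` and `±1`, rather than as a linear spline, to make the Lipschitz constant `1` visible. -/
noncomputable def quadraticBumpDeriv (a b x : ℝ) : ℝ :=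
  max (min (x - a)⁺ ((a + b) / 2 - x)) (-(b - x)⁺)

section quadraticBump

variable {a b x : ℝ}

lemma quadraticBumpDeriv_eq_spline (hab : a ≤ b) :
    quadraticBumpDeriv a b x =
      (x - a)⁺ - 2 * (x - (3 * a + b) / 4)⁺ + 2 * (x - (a + 3 * b) / 4)⁺ - (x - b)⁺ := by
  simp only [quadraticBumpDeriv, posPart_def]
  grind

lemma hasDerivAt_quadraticBump (hab : a ≤ b) (x : ℝ) :
    HasDerivAt (quadraticBump a b) (quadraticBumpDeriv a b x) x := by
  have hknot (c : ℝ) : HasDerivAt (fun t : ℝ => (t - c)⁺ ^ 2) (2 * (x - c)⁺) x := by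
    simpa using (hasDerivAt_posPart_pow one_lt_two (x - c)).comp_sub_const x c
  have hspline := ((((hknot a).sub ((hknot ((3 * a + b) / 4)).const_mul 2)).add
    ((hknot ((a + 3 * b) / 4)).const_mul 2)).sub (hknot b)).div_const 2
  refine hspline.congr_deriv ?_
  rw [quadraticBumpDeriv_eq_spline hab]
  ring

lemma lipschitzWith_quadraticBumpDeriv (a b : ℝ) : LipschitzWith 1 (quadraticBumpDeriv a b) := by
  have hsub (c : ℝ) : LipschitzWith 1 fun x : ℝ => x - c :=
    (IsometryEquiv.subRight c).isometry.lipschitz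
  have hneg (c : ℝ) : LipschitzWith 1 fun x : ℝ => c - x :=
    (IsometryEquiv.subLeft c).isometry.lipschitz
  have hlip := (((hsub a).max_const 0).min (hneg ((a + b) / 2))).max ((hneg b).max_const 0).neg
  rwa [max_self, max_self] at hlip

lemma quadraticBump_eq_zero_of_notMem_Ioo (hab : a ≤ b) (hx : x ∉ Ioo a b) :
    quadraticBump a b x = 0 := by
  simp only [quadraticBump, posPart_def]
  grind

lemma quadraticBump_midpoint (hab : a ≤ b) :
    quadraticBump a b ((a + b) / 2) = ((b - a) / 4) ^ 2 := by
  simp only [quadraticBump, posPart_def]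
  grind

end quadraticBump

theorem fooling_function_recovery_general {ι : Type*} [Fintype ι] {a b : ℝ} (hab : a ≤ b)
    (ξ : ι → ℝ) :
    ∃ f f' : ℝ → ℝ,
      (∀ x, HasDerivAt f (f' x) x) ∧
      LipschitzWith 1 f' ∧
      (∀ i, f (ξ i) = 0) ∧
      ∃ x ∈ Icc a b, f x = (b - a) ^ 2 / (16 * ((Fintype.card ι : ℝ) + 1) ^ 2) := by
  obtain ⟨u, v, huv, hsub, hlength, hgap⟩ := exists_Icc_subset_forall_notMem_Ioo hab ξ
  refine ⟨quadraticBump u v, quadraticBumpDeriv u v, hasDerivAt_quadraticBump huv,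
    lipschitzWith_quadraticBumpDeriv u v,
    fun i => quadraticBump_eq_zero_of_notMem_Ioo huv (hgap i),
    (u + v) / 2, hsub ⟨by linarith, by linarith⟩, ?_⟩
  rw [quadraticBump_midpoint huv, hlength]
  field_simp
  norm_num

/-- Fooling-function construction for the lower complexity bound for `L∞` recovery on
balls: for any sample points `ξ_1,…,ξ_n` in `[0,1]` there is a continuously
differentiable `f` whose derivative is Lipschitz with constant `1` (so `‖f″‖_∞ ≤ 1`),
vanishing at every `ξ_i`, with `‖f‖_∞ ≥ 1/(16(n+1)²)`. -/
theorem fooling_function_recovery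
    (n : ℕ) (ξ : Fin n → ℝ) (hξ : ∀ i, ξ i ∈ Icc (0:ℝ) 1) :
    ∃ f f' : ℝ → ℝ,
      (∀ x ∈ Icc (0:ℝ) 1, HasDerivWithinAt f (f' x) (Icc 0 1) x) ∧
      ContinuousOn f' (Icc 0 1) ∧
      LipschitzOnWith 1 f' (Icc 0 1) ∧
      (∀ i, f (ξ i) = 0) ∧
      ∃ x ∈ Icc (0:ℝ) 1, 1 / (16 * ((n : ℝ) + 1) ^ 2) ≤ |f x| := by
  obtain ⟨f, f', hderiv, hlip, hzero, x, hx, hfx⟩ :=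
    fooling_function_recovery_general zero_le_one ξ
  exact ⟨f, f', fun y _ => (hderiv y).hasDerivWithinAt, hlip.continuous.continuousOn,
    hlip.lipschitzOnWith, hzero, x, hx, by simp [hfx]⟩
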